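/- arXiv:1303.7291 — 2 statements merged into one kernel-verified Lean document; each statement's English description precedes it below -/
import Mathlib

section
/- Fix integers n ≥ 1 and k with 1 ≤ k ≤ n, let x̃ ∈ ℝⁿ be k-sparse nonnegative with x̃ ≠ 0, let σ > 0, C_w > 0, g ∈ ℝᵐ and h ∈ ℝⁿ. Then strong Lagrange duality holds for the constrained minimization defining ξ: ξ(σ, g, h, x̃) = sup { σ·√((‖g‖₂ + γ)² − ‖h + ν·1 − λ‖₂²) − Σ_{i=n−k+1}^{n} λ_i·x̃_i − γ·√(C_w² + σ²) : ν ≥ 0, λ ∈ ℝⁿ with 0 ≤ λ_i ≤ 2ν for all i, γ ≥ 0, and ‖g‖₂ + γ ≥ ‖h + ν·1 − λ‖₂ }. -/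
noncomputable def e2norm {d : ℕ} (x : Fin d → ℝ) : ℝ := Real.sqrt (∑ i, x i ^ 2)

noncomputable def l1norm {d : ℕ} (x : Fin d → ℝ) : ℝ := ∑ i, |x i|

def kSparseNonneg (n k : ℕ) (x : Fin n → ℝ) : Prop :=
  (∀ i : Fin n, (i : ℕ) < n - k → x i = 0) ∧ ∀ i, 0 ≤ x i

noncomputable def tailSum {n : ℕ} (k : ℕ) (lam x : Fin n → ℝ) : ℝ :=
  ∑ i ∈ Finset.univ.filter (fun i : Fin n => n - k ≤ (i : ℕ)), lam i * x i

/-! Duality comes from the Mazur–Orlicz form of the Hahn–Banach theorem: if a sublinear function `p`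
dominates the heights `t` of all points `(y, t)` of a convex set `T`, then a linear functional lies
between `T` and `p`.

With `p` the largest coordinate and `T` spanned by the values of the objective and the constraints,
this functional is the vector of Lagrange multipliers `ν` (for the `ℓ1` constraint) and `γ` (for the
ball). The ball is written as `√(‖w‖² + σ²) ≤ √(C² + σ²)`, so that `γ` simply adds to `‖g‖`, and
Slater's condition holds at `-ε x̃`. The Lagrangian is then, up to a constant,
`K √(‖w‖² + σ²) + ⟨h, w⟩ + ν ‖x̃ + w‖₁` with `K = ‖g‖ + γ`.

Since `√(‖w‖² + σ²)` is the Hilbert norm of `(w, σ)`, a second application, to the sublinear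
function `(r, y) ↦ K ‖r‖ + ν ‖y‖₁`, replaces the minimisation over `w`: the functional it produces
has a component `u` with `|u i| ≤ ν`, which is `ν 1 - λ` with `0 ≤ λ ≤ 2 ν`. -/

open scoped Pointwise RealInnerProductSpace

section ConvexDuality

variable {E ι : Type*} [AddCommGroup E] [Module ℝ E]

theorem exists_linearMap_le_of_pointedCone {K : PointedCone ℝ (E × ℝ)}
    (hK_fst : ∀ y, ∃ t, (y, t) ∈ K) (hK_zero : ∀ t, ((0 : E), t) ∈ K → 0 ≤ t) :
    ∃ ℓ : E →ₗ[ℝ] ℝ, ∀ a ∈ K, ℓ a.1 ≤ a.2 := by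
  let vertical : E × ℝ →ₗ.[ℝ] ℝ :=
    ⟨LinearMap.range (LinearMap.inr ℝ E ℝ), (LinearMap.snd ℝ E ℝ).domRestrict _⟩
  obtain ⟨φ, hφ_vertical, hφ_nonneg⟩ := riesz_extension K vertical
    (by
      rintro ⟨_, t, rfl⟩ ht
      exact hK_zero t ht)
    (by
      rintro ⟨y, t⟩
      obtain ⟨t', ht'⟩ := hK_fst y
      exact ⟨⟨(0, t' - t), t' - t, rfl⟩, by simpa using ht'⟩)
  have hφ (y : E) (t : ℝ) : φ (y, t) = φ (y, 0) + t := by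
    have ht : φ (0, t) = t := hφ_vertical ⟨(0, t), t, rfl⟩
    conv_rhs => rw [← ht, ← map_add, Prod.mk_add_mk, add_zero, zero_add]
  refine ⟨-(φ ∘ₗ LinearMap.inl ℝ E ℝ), fun a ha ↦ ?_⟩
  have : 0 ≤ φ (a.1, 0) + a.2 := hφ a.1 a.2 ▸ hφ_nonneg a ha
  rwa [LinearMap.neg_apply, LinearMap.comp_apply, LinearMap.inl_apply, neg_le_iff_add_nonneg']

theorem exists_linearMap_le_of_convex {p : E → ℝ}
    (p_smul : ∀ c : ℝ, 0 ≤ c → ∀ y, p (c • y) = c * p y) (p_add : ∀ y z, p (y + z) ≤ p y + p z)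
    {T : Set (E × ℝ)} (hT : Convex ℝ T) (hT_ne : T.Nonempty) (hTp : ∀ z ∈ T, z.2 ≤ p z.1) :
    ∃ ℓ : E →ₗ[ℝ] ℝ, (∀ y, ℓ y ≤ p y) ∧ ∀ z ∈ T, z.2 ≤ ℓ z.1 := by
  have p_zero : p 0 = 0 := by simpa using p_smul 0 le_rfl 0
  obtain ⟨z₀, hz₀⟩ := hT_ne
  -- The epigraph of `p` minus the cone spanned by `T`.
  let K : PointedCone ℝ (E × ℝ) :=
    { carrier := {a | ∃ r : ℝ, 0 ≤ r ∧ ∃ z ∈ T, p (a.1 + r • z.1) ≤ a.2 + r * z.2}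
      zero_mem' := ⟨0, le_rfl, z₀, hz₀, by simp [p_zero]⟩
      add_mem' := by
        rintro a b ⟨r, hr, y, hy, hay⟩ ⟨t, ht, z, hz, hbz⟩
        obtain ⟨v, hv, hv_eq⟩ : r • y + t • z ∈ ((r + t) • T : Set (E × ℝ)) := by
          rw [hT.add_smul hr ht]
          exact Set.add_mem_add (Set.smul_mem_smul_set hy) (Set.smul_mem_smul_set hz)
        obtain ⟨hv₁, hv₂⟩ := Prod.ext_iff.1 hv_eq
        simp only [Prod.smul_fst, Prod.smul_snd, Prod.fst_add, Prod.snd_add, smul_eq_mul]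
          at hv₁ hv₂
        refine ⟨r + t, add_nonneg hr ht, v, hv, ?_⟩
        calc p ((a + b).1 + (r + t) • v.1) = p ((a.1 + r • y.1) + (b.1 + t • z.1)) := by
              rw [hv₁, Prod.fst_add, add_add_add_comm]
          _ ≤ (a.2 + r * y.2) + (b.2 + t * z.2) := (p_add _ _).trans (add_le_add hay hbz)
          _ = (a + b).2 + (r + t) * v.2 := by rw [hv₂, Prod.snd_add, add_add_add_comm]
      smul_mem' := by
        rintro ⟨c, hc⟩ a ⟨r, hr, z, hz, haz⟩
        refine ⟨c * r, mul_nonneg hc hr, z, hz, ?_⟩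
        calc p (c • a.1 + (c * r) • z.1) = c * p (a.1 + r • z.1) := by
              rw [mul_smul, ← smul_add, p_smul c hc]
          _ ≤ c * (a.2 + r * z.2) := mul_le_mul_of_nonneg_left haz hc
          _ = c * a.2 + c * r * z.2 := by ring }
  obtain ⟨ℓ, hℓ⟩ := exists_linearMap_le_of_pointedCone (K := K)
    (fun y ↦ ⟨p y, 0, le_rfl, z₀, hz₀, by simp⟩)
    (by
      rintro t ⟨r, hr, z, hz, htz⟩
      rw [zero_add, p_smul r hr] at htz
      linarith [mul_le_mul_of_nonneg_left (hTp z hz) hr])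
  refine ⟨ℓ, fun y ↦ hℓ (y, p y) ⟨0, le_rfl, z₀, hz₀, by simp⟩, fun z hz ↦ ?_⟩
  have := hℓ (-z) ⟨1, zero_le_one, z, hz, by simp [p_zero]⟩
  rw [Prod.fst_neg, map_neg, Prod.snd_neg] at this
  exact neg_le_neg_iff.1 this

theorem exists_mem_stdSimplex_forall_sum_mul_nonneg [Fintype ι] [Nonempty ι] {s : Set E}
    (hs : s.Nonempty) {f : ι → E → ℝ} (hf : ∀ i, ConvexOn ℝ s (f i))
    (hf_max : ∀ w ∈ s, ∃ i, 0 ≤ f i w) :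
    ∃ μ ∈ stdSimplex ℝ ι, ∀ w ∈ s, 0 ≤ ∑ i, μ i * f i w := by
  classical
  let p : (ι → ℝ) → ℝ := Finset.univ.sup' Finset.univ_nonempty
  have p_le {y : ι → ℝ} {b : ℝ} (h : ∀ i, y i ≤ b) : p y ≤ b :=
    Finset.sup'_le _ _ fun i _ ↦ h i
  have le_p (y : ι → ℝ) (i : ι) : y i ≤ p y := Finset.le_sup' y (Finset.mem_univ i)
  -- Everything above a value vector is included, which is what makes `T` convex.
  let T : Set ((ι → ℝ) × ℝ) := {z | (∃ w ∈ s, ∀ i, f i w ≤ z.1 i) ∧ z.2 = 0}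
  have hT : Convex ℝ T := by
    rintro y ⟨⟨w, hw, hwy⟩, hy⟩ z ⟨⟨v, hv, hvz⟩, hz⟩ a b ha hb hab
    refine ⟨⟨a • w + b • v, (hf (Classical.arbitrary ι)).1 hw hv ha hb hab, fun i ↦ ?_⟩,
      by simp [hy, hz]⟩
    exact ((hf i).2 hw hv ha hb hab).trans (add_le_add
      (mul_le_mul_of_nonneg_left (hwy i) ha) (mul_le_mul_of_nonneg_left (hvz i) hb))
  obtain ⟨w₀, hw₀⟩ := hs
  obtain ⟨ℓ, hℓp, hℓT⟩ := exists_linearMap_le_of_convex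
    (fun c hc y ↦ (Finset.mul₀_sup' hc y Finset.univ Finset.univ_nonempty).symm)
    (fun y z ↦ p_le fun i ↦ add_le_add (le_p y i) (le_p z i)) hT
    ⟨(fun i ↦ f i w₀, 0), ⟨w₀, hw₀, fun _ ↦ le_rfl⟩, rfl⟩
    (by
      rintro z ⟨⟨w, hw, hwz⟩, hz⟩
      obtain ⟨i, hi⟩ := hf_max w hw
      exact hz.trans_le (hi.trans ((hwz i).trans (le_p z.1 i))))
  let μ : ι → ℝ := fun i ↦ ℓ fun j ↦ if i = j then 1 else 0
  have hℓ (y : ι → ℝ) : ℓ y = ∑ i, μ i * y i := by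
    simp only [LinearMap.pi_apply_eq_sum_univ ℓ y, smul_eq_mul, mul_comm, μ]
  refine ⟨μ, ⟨fun i ↦ ?_, ?_⟩, fun w hw ↦ ?_⟩
  · have h_neg : ℓ (-fun j ↦ if i = j then 1 else 0) ≤ 0 := (hℓp _).trans (p_le fun j ↦ by
      by_cases h : i = j <;> simp [h])
    rwa [map_neg, neg_nonpos] at h_neg
  · have h_le : ℓ 1 ≤ 1 := (hℓp 1).trans (p_le fun _ ↦ le_rfl)
    have h_ge : ℓ (-1) ≤ -1 := (hℓp (-1)).trans (p_le fun _ ↦ le_rfl)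
    rw [map_neg, neg_le_neg_iff] at h_ge
    simpa only [hℓ, Pi.one_apply, mul_one] using h_le.antisymm h_ge
  · rw [← hℓ]
    exact hℓT (fun i ↦ f i w, 0) ⟨⟨w, hw, fun _ ↦ le_rfl⟩, rfl⟩

theorem exists_lagrange_multipliers [Fintype ι] {s : Set E} {f : E → ℝ} {c : ι → E → ℝ}
    (hf : ConvexOn ℝ s f) (hc : ∀ i, ConvexOn ℝ s (c i))
    {w₀ : E} (hw₀ : w₀ ∈ s) (hcw₀ : ∀ i, c i w₀ < 0)
    {p : ℝ} (hp : ∀ w ∈ s, (∀ i, c i w ≤ 0) → p ≤ f w) :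
    ∃ μ : ι → ℝ, (∀ i, 0 ≤ μ i) ∧ ∀ w ∈ s, p ≤ f w + ∑ i, μ i * c i w := by
  obtain ⟨μ, ⟨hμ_nonneg, hμ_sum⟩, hμ⟩ := exists_mem_stdSimplex_forall_sum_mul_nonneg
    (f := fun j : Option ι ↦ j.elim (fun w ↦ f w - p) c) ⟨w₀, hw₀⟩
    (by
      rintro (_ | i)
      · exact hf.sub (concaveOn_const p hf.1)
      · exact hc i)
    (by
      intro w hw
      by_contra! hneg
      have h_below : f w - p < 0 := hneg none
      linarith [hp w hw fun i ↦ (hneg (some i)).le])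
  simp only [Fintype.sum_option, Option.elim] at hμ_sum hμ
  have hμ_pos : 0 < μ none := by
    refine (hμ_nonneg none).lt_of_ne fun h₀ ↦ ?_
    rw [← h₀, zero_add] at hμ_sum
    obtain ⟨i, -, hi⟩ := Finset.exists_ne_zero_of_sum_ne_zero (hμ_sum.trans_ne one_ne_zero)
    have h_neg : ∑ i, μ (some i) * c i w₀ < 0 := Finset.sum_neg'
      (fun i _ ↦ mul_nonpos_of_nonneg_of_nonpos (hμ_nonneg _) (hcw₀ i).le)
      ⟨i, Finset.mem_univ i, mul_neg_of_pos_of_neg ((hμ_nonneg _).lt_of_ne' hi) (hcw₀ i)⟩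
    have h_nonneg := hμ w₀ hw₀
    rw [← h₀, zero_mul, zero_add] at h_nonneg
    exact h_neg.not_ge h_nonneg
  refine ⟨fun i ↦ μ (some i) / μ none, fun i ↦ div_nonneg (hμ_nonneg _) hμ_pos.le, fun w hw ↦ ?_⟩
  have hdiv := div_nonneg (hμ w hw) hμ_pos.le
  rw [add_div, mul_div_cancel_left₀ _ hμ_pos.ne', Finset.sum_div] at hdiv
  simp only [div_mul_eq_mul_div]
  linarith

theorem linearMap_eq_zero_of_forall_le {ℓ : E →ₗ[ℝ] ℝ} {b : ℝ} (hℓ : ∀ w, b ≤ ℓ w) : ℓ = 0 := by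
  by_contra h
  obtain ⟨w, hw⟩ := LinearMap.surjective h (b - 1)
  linarith [hℓ w]

end ConvexDuality

section SqrtNormSqAddSq

variable {V : Type*} [NormedAddCommGroup V]

theorem sqrt_norm_sq_add_sq_eq_norm_toLp (w : V) (σ : ℝ) :
    √(‖w‖ ^ 2 + σ ^ 2) = ‖WithLp.toLp 2 (w, σ)‖ := by
  simp [WithLp.prod_norm_eq_of_L2]

theorem toLp_convexCombination [Module ℝ V] (σ : ℝ) (v w : V) {a b : ℝ} (hab : a + b = 1) :
    WithLp.toLp 2 (a • v + b • w, σ) = a • WithLp.toLp 2 (v, σ) + b • WithLp.toLp 2 (w, σ) := by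
  rw [← WithLp.toLp_smul, ← WithLp.toLp_smul, ← WithLp.toLp_add, Prod.smul_mk, Prod.smul_mk,
    Prod.mk_add_mk, ← add_smul, hab, one_smul]

theorem convexOn_sqrt_norm_sq_add_sq [NormedSpace ℝ V] (σ : ℝ) :
    ConvexOn ℝ Set.univ fun w : V ↦ √(‖w‖ ^ 2 + σ ^ 2) := by
  refine ⟨convex_univ, fun v _ w _ a b ha hb hab ↦ ?_⟩
  simp only [sqrt_norm_sq_add_sq_eq_norm_toLp, toLp_convexCombination σ v w hab]
  exact convexOn_univ_norm.2 trivial trivial ha hb hab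

end SqrtNormSqAddSq

section LassoDuality

variable {V : Type*} [NormedAddCommGroup V] [InnerProductSpace ℝ V]

theorem exists_inner_eq_of_forall_le_mul_norm [CompleteSpace V] {ℓ : V →ₗ[ℝ] ℝ} {K : ℝ}
    (hK : 0 ≤ K) (hℓ : ∀ z, ℓ z ≤ K * ‖z‖) : ∃ r : V, ‖r‖ ≤ K ∧ ∀ z, ℓ z = ⟪r, z⟫ := by
  have hℓ_abs (z : V) : ‖ℓ z‖ ≤ K * ‖z‖ :=
    abs_le'.2 ⟨hℓ z, by simpa only [map_neg, norm_neg] using hℓ (-z)⟩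
  refine ⟨(InnerProductSpace.toDual ℝ V).symm (ℓ.mkContinuous K hℓ_abs), ?_, fun z ↦ ?_⟩
  · rw [LinearIsometryEquiv.norm_map]
    exact ℓ.mkContinuous_norm_le hK hℓ_abs
  · rw [InnerProductSpace.toDual_symm_apply, LinearMap.mkContinuous_apply]

theorem mul_sqrt_sub_sq_add_mul_le {K a : ℝ} (ha : 0 ≤ a) (haK : a ≤ K) (b σ : ℝ) :
    σ * √(K ^ 2 - a ^ 2) + a * b ≤ K * √(b ^ 2 + σ ^ 2) := by
  have hK : 0 ≤ K := ha.trans haK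
  have hD : √(K ^ 2 - a ^ 2) ^ 2 = K ^ 2 - a ^ 2 := Real.sq_sqrt (by nlinarith)
  set D := √(K ^ 2 - a ^ 2)
  refine le_of_abs_le (abs_le_of_sq_le_sq ?_ (by positivity))
  rw [mul_pow, Real.sq_sqrt (by positivity)]
  nlinarith [sq_nonneg (σ * a - D * b)]

theorem exists_inner_add_linearMap_le_of_convex {H : Type*} [NormedAddCommGroup H]
    [InnerProductSpace ℝ H] [CompleteSpace H] {E : Type*} [AddCommGroup E] [Module ℝ E]
    {N : Seminorm ℝ E} {K : ℝ} (hK : 0 ≤ K) {T : Set ((H × E) × ℝ)} (hT : Convex ℝ T)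
    (hT_ne : T.Nonempty) (hT_le : ∀ z ∈ T, z.2 ≤ K * ‖z.1.1‖ + N z.1.2) :
    ∃ r : H, ∃ ℓ : E →ₗ[ℝ] ℝ,
      ‖r‖ ≤ K ∧ (∀ y, ℓ y ≤ N y) ∧ ∀ z ∈ T, z.2 ≤ ⟪r, z.1.1⟫ + ℓ z.1.2 := by
  obtain ⟨φ, hφ_le, hφT⟩ := exists_linearMap_le_of_convex (p := fun z ↦ K * ‖z.1‖ + N z.2)
    (fun c hc z ↦ by
      simp only [Prod.smul_fst, Prod.smul_snd, norm_smul, map_smul_eq_mul,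
        Real.norm_of_nonneg hc]
      ring)
    (fun y z ↦ by
      have h_norm := mul_le_mul_of_nonneg_left (norm_add_le y.1 z.1) hK
      have h_seminorm := map_add_le_add N y.2 z.2
      simp only [Prod.fst_add, Prod.snd_add]
      linarith)
    hT hT_ne hT_le
  obtain ⟨r, hrK, hr⟩ := exists_inner_eq_of_forall_le_mul_norm
    (ℓ := φ ∘ₗ LinearMap.inl ℝ H E) hK fun z ↦ by simpa using hφ_le (z, 0)
  refine ⟨r, φ ∘ₗ LinearMap.inr ℝ H E, hrK, fun y ↦ by simpa using hφ_le (0, y), fun z hz ↦ ?_⟩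
  rw [← hr, LinearMap.comp_apply, LinearMap.comp_apply, ← map_add, LinearMap.inl_apply,
    LinearMap.inr_apply, Prod.fst_add_snd]
  exact hφT z hz

theorem exists_inner_le_of_forall_le_sqrt [CompleteSpace V] {N : Seminorm ℝ V} {h x : V}
    {K σ q : ℝ} (hK : 0 ≤ K) (hσ : 0 ≤ σ)
    (hq : ∀ w, q ≤ K * √(‖w‖ ^ 2 + σ ^ 2) + ⟪h, w⟫ + N (x + w)) :
    ∃ u : V, (∀ y, ⟪u, y⟫ ≤ N y) ∧ ‖h + u‖ ≤ K ∧
      q ≤ σ * √(K ^ 2 - ‖h + u‖ ^ 2) + ⟪u, x⟫ := by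
  let T : Set ((WithLp 2 (V × ℝ) × V) × ℝ) :=
    Set.range fun w : V ↦ ((WithLp.toLp 2 (w, σ), x + w), q - ⟪h, w⟫)
  have hT : Convex ℝ T := by
    rintro _ ⟨v, rfl⟩ _ ⟨w, rfl⟩ a b - - hab
    refine ⟨a • v + b • w, Prod.ext (Prod.ext (toLp_convexCombination σ v w hab) ?_) ?_⟩
    · simp only [Prod.fst_add, Prod.snd_add, Prod.smul_fst, Prod.smul_snd]
      rw [smul_add, smul_add, add_add_add_comm, ← add_smul, hab, one_smul]
    · simp only [Prod.snd_add, Prod.smul_snd, smul_eq_mul, inner_add_right, inner_smul_right]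
      linear_combination (-q) * hab
  obtain ⟨r, ℓ, hrK, hℓN, hT_le⟩ := exists_inner_add_linearMap_le_of_convex hK hT
    (Set.range_nonempty _) (by
      rintro _ ⟨w, rfl⟩
      rw [← sqrt_norm_sq_add_sq_eq_norm_toLp]
      linarith [hq w])
  obtain ⟨⟨a, s⟩, rfl⟩ := WithLp.toLp_surjective 2 r
  have h_le (w : V) : q - ⟪h, w⟫ ≤ ⟪a, w⟫ + s * σ + (ℓ x + ℓ w) := by
    simpa [mul_comm] using hT_le _ ⟨w, rfl⟩
  have h_cancel : ℓ + innerₗ V (h + a) = 0 :=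
    linearMap_eq_zero_of_forall_le (b := q - s * σ - ℓ x) fun w ↦ by
      rw [LinearMap.add_apply, innerₗ_apply_apply, inner_add_left]
      linarith [h_le w]
  have hℓ (w : V) : ⟪-(h + a), w⟫ = ℓ w := by
    rw [inner_neg_left, ← innerₗ_apply_apply, eq_neg_of_add_eq_zero_left h_cancel,
      LinearMap.neg_apply]
  have h_norm : ‖h + -(h + a)‖ = ‖a‖ := by
    rw [neg_add, add_neg_cancel_left, norm_neg]
  have hrK_sq : ‖a‖ ^ 2 + s ^ 2 ≤ K ^ 2 := by
    rw [← Real.sqrt_le_left hK, sqrt_norm_sq_add_sq_eq_norm_toLp]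
    exact hrK
  refine ⟨-(h + a), fun y ↦ (hℓ y).trans_le (hℓN y), ?_, ?_⟩
  · rw [h_norm]
    exact abs_le_of_sq_le_sq' (by linarith [sq_nonneg s]) hK |>.2
  · have hs : s ≤ √(K ^ 2 - ‖a‖ ^ 2) := Real.le_sqrt_of_sq_le (by linarith)
    have h_origin := h_le 0
    simp only [inner_zero_right, map_zero] at h_origin
    rw [h_norm, hℓ]
    linarith [mul_le_mul_of_nonneg_left hs hσ]

/-- The objective minimised in `ξ`, in a Hilbert space; `G` stands for `‖g‖`. -/
noncomputable def lassoObjective (G σ : ℝ) (h w : V) : ℝ :=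
  √(‖w‖ ^ 2 + σ ^ 2) * G + ⟪h, w⟫

/-- The set `S_w(σ, x, C)`, with an arbitrary seminorm `N` in place of the `ℓ1` norm. -/
def lassoFeasible (N : Seminorm ℝ V) (x : V) (C : ℝ) : Set V :=
  {w | ‖w‖ ≤ C ∧ N (x + w) ≤ N x}

/-- Feasibility for the dual problem, in the variable `u = ν 1 - λ`: the box constraint
`0 ≤ λ ≤ 2 ν` says that `⟪u, ·⟫` is dominated by `ν` times the `ℓ1` norm, and `ℓ1` is replaced by an
arbitrary seminorm `N`. -/
structure LassoDualFeasible (N : Seminorm ℝ V) (G : ℝ) (h : V) (ν : ℝ) (u : V) (γ : ℝ) :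
    Prop where
  nu_nonneg : 0 ≤ ν
  inner_le : ∀ y, ⟪u, y⟫ ≤ ν * N y
  gamma_nonneg : 0 ≤ γ
  norm_le : ‖h + u‖ ≤ G + γ

/-- The objective of the dual problem, in the variable `u = ν 1 - λ`; the term `ν * N x - ⟪u, x⟫` is
`⟪λ, x⟫` when `N` is the `ℓ1` norm and `x` is nonnegative. -/
noncomputable def lassoDualObjective (N : Seminorm ℝ V) (G σ C : ℝ) (h x : V)
    (ν : ℝ) (u : V) (γ : ℝ) : ℝ :=
  σ * √((G + γ) ^ 2 - ‖h + u‖ ^ 2) - (ν * N x - ⟪u, x⟫) - γ * √(C ^ 2 + σ ^ 2)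

variable {N : Seminorm ℝ V} {G σ C : ℝ} {h x : V}

theorem lassoDualObjective_le_lassoObjective {w u : V} {ν γ : ℝ} (hw : w ∈ lassoFeasible N x C)
    (hd : LassoDualFeasible N G h ν u γ) :
    lassoDualObjective N G σ C h x ν u γ ≤ lassoObjective G σ h w := by
  obtain ⟨hwC, hwN⟩ := hw
  have h_cs : -(‖h + u‖ * ‖w‖) ≤ ⟪h, w⟫ + ⟪u, w⟫ := by
    rw [← inner_add_left]
    exact neg_le_of_abs_le (abs_real_inner_le_norm _ _)
  have h_seminorm : ⟪u, x⟫ + ⟪u, w⟫ ≤ ν * N x := by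
    rw [← inner_add_right]
    exact (hd.inner_le _).trans (mul_le_mul_of_nonneg_left hwN hd.nu_nonneg)
  have h_ball : γ * √(‖w‖ ^ 2 + σ ^ 2) ≤ γ * √(C ^ 2 + σ ^ 2) :=
    mul_le_mul_of_nonneg_left (by gcongr) hd.gamma_nonneg
  have h_sqrt := mul_sqrt_sub_sq_add_mul_le (norm_nonneg _) hd.norm_le ‖w‖ σ
  unfold lassoDualObjective lassoObjective
  linarith

theorem exists_norm_lt_and_seminorm_add_lt (hC : 0 < C) (hx : N x ≠ 0) :
    ∃ w, ‖w‖ < C ∧ N (x + w) < N x := by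
  have hNx : 0 < N x := (apply_nonneg N x).lt_of_ne' hx
  have h_denom : 0 < C + ‖x‖ + 1 := by positivity
  set ε := C / (C + ‖x‖ + 1) with hε_def
  have hε_pos : 0 < ε := by positivity
  have hε_one : ε < 1 := (div_lt_one h_denom).2 (by linarith [norm_nonneg x])
  refine ⟨-(ε • x), ?_, ?_⟩
  · calc ‖-(ε • x)‖ = C * ‖x‖ / (C + ‖x‖ + 1) := by
          rw [norm_neg, norm_smul, Real.norm_of_nonneg hε_pos.le, hε_def, div_mul_eq_mul_div]
      _ < C := by
          rw [div_lt_iff₀ h_denom]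
          exact mul_lt_mul_of_pos_left (by linarith) hC
  · calc N (x + -(ε • x)) = (1 - ε) * N x := by
          rw [← sub_eq_add_neg, ← Real.norm_of_nonneg (sub_nonneg.2 hε_one.le),
            ← map_smul_eq_mul, sub_smul, one_smul]
      _ < N x := mul_lt_of_lt_one_left hNx (sub_lt_self 1 hε_pos)

theorem convexOn_lassoObjective (hG : 0 ≤ G) (σ : ℝ) (h : V) :
    ConvexOn ℝ Set.univ (lassoObjective G σ h) := by
  have h_sqrt := (convexOn_sqrt_norm_sq_add_sq (V := V) σ).smul hG
  refine (h_sqrt.add ((innerₗ V h).convexOn convex_univ)).congr fun w _ ↦ ?_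
  rw [Pi.add_apply, smul_eq_mul, mul_comm, innerₗ_apply_apply, lassoObjective]

theorem exists_multipliers_lasso (hG : 0 ≤ G) (hC : 0 < C) (hx : N x ≠ 0)
    {p : ℝ} (hp : ∀ w ∈ lassoFeasible N x C, p ≤ lassoObjective G σ h w) :
    ∃ ν γ : ℝ, 0 ≤ ν ∧ 0 ≤ γ ∧ ∀ w, p ≤ lassoObjective G σ h w + ν * (N (x + w) - N x)
      + γ * (√(‖w‖ ^ 2 + σ ^ 2) - √(C ^ 2 + σ ^ 2)) := by
  obtain ⟨w₀, hw₀C, hw₀N⟩ := exists_norm_lt_and_seminorm_add_lt hC hx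
  let c : Fin 2 → V → ℝ :=
    ![fun w ↦ N (x + w) - N x, fun w ↦ √(‖w‖ ^ 2 + σ ^ 2) - √(C ^ 2 + σ ^ 2)]
  have hc_convex : ∀ i, ConvexOn ℝ Set.univ (c i) := by
    refine Fin.forall_fin_two.2 ⟨?_, ?_⟩
    · exact (N.convexOn.translate_right x).sub (concaveOn_const _ convex_univ)
    · exact (convexOn_sqrt_norm_sq_add_sq σ).sub (concaveOn_const _ convex_univ)
  have hc_slater : ∀ i, c i w₀ < 0 := by
    refine Fin.forall_fin_two.2 ⟨sub_neg.2 hw₀N, sub_neg.2 ?_⟩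
    exact Real.sqrt_lt_sqrt (by positivity) (by gcongr)
  have hc_feasible (w : V) (hw : ∀ i, c i w ≤ 0) : w ∈ lassoFeasible N x C := by
    obtain ⟨hwN, hwC⟩ := Fin.forall_fin_two.1 hw
    refine ⟨?_, sub_nonpos.1 hwN⟩
    have h_sq := (Real.sqrt_le_sqrt_iff (by positivity)).1 (sub_nonpos.1 hwC)
    exact le_of_sq_le_sq (by linarith) hC.le
  obtain ⟨μ, hμ_nonneg, hμ⟩ := exists_lagrange_multipliers (convexOn_lassoObjective hG σ h)
    hc_convex (Set.mem_univ w₀) hc_slater fun w _ hw ↦ hp w (hc_feasible w hw)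
  refine ⟨μ 0, μ 1, hμ_nonneg 0, hμ_nonneg 1, fun w ↦ ?_⟩
  simpa [c, add_assoc] using hμ w (Set.mem_univ w)

theorem exists_le_lassoDualObjective [CompleteSpace V] (hG : 0 ≤ G) (hσ : 0 ≤ σ) (hC : 0 < C)
    (hx : N x ≠ 0) {p : ℝ} (hp : ∀ w ∈ lassoFeasible N x C, p ≤ lassoObjective G σ h w) :
    ∃ ν u γ, LassoDualFeasible N G h ν u γ ∧ p ≤ lassoDualObjective N G σ C h x ν u γ := by
  obtain ⟨ν, γ, hν, hγ, h_lagrangian⟩ := exists_multipliers_lasso hG hC hx hp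
  lift ν to NNReal using hν
  obtain ⟨u, hu, hu_norm, hpu⟩ := exists_inner_le_of_forall_le_sqrt (V := V)
    (N := ν • N) (h := h) (x := x) (K := G + γ)
    (q := p + ν * N x + γ * √(C ^ 2 + σ ^ 2)) (add_nonneg hG hγ) hσ (fun w ↦ by
      have := h_lagrangian w
      unfold lassoObjective at this
      rw [smul_apply, NNReal.smul_def, smul_eq_mul]
      linarith)
  refine ⟨ν, u, γ, ⟨ν.2, hu, hγ, hu_norm⟩, ?_⟩
  unfold lassoDualObjective
  linarith

theorem lasso_stmt3_general [CompleteSpace V] (hG : 0 ≤ G) (hσ : 0 ≤ σ)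
    (hC : 0 < C) (hx : N x ≠ 0) :
    IsGreatest {z | ∃ ν u γ, LassoDualFeasible N G h ν u γ ∧
        z = lassoDualObjective N G σ C h x ν u γ}
      (sInf (lassoObjective G σ h '' lassoFeasible N x C)) := by
  have h_ne : (lassoObjective G σ h '' lassoFeasible N x C).Nonempty :=
    ⟨_, 0, ⟨by simpa using hC.le, by simp⟩, rfl⟩
  have h_weak {ν γ : ℝ} {u : V} (hd : LassoDualFeasible N G h ν u γ) :
      lassoDualObjective N G σ C h x ν u γ ∈
        lowerBounds (lassoObjective G σ h '' lassoFeasible N x C) := by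
    rintro _ ⟨w, hw, rfl⟩
    exact lassoDualObjective_le_lassoObjective hw hd
  have h_bdd : BddBelow (lassoObjective G σ h '' lassoFeasible N x C) :=
    ⟨_, h_weak (ν := 0) (u := 0) (γ := ‖h‖)
      ⟨le_rfl, by simp, norm_nonneg h, by simpa using hG⟩⟩
  obtain ⟨ν, u, γ, hd, h_le⟩ := exists_le_lassoDualObjective (h := h) hG hσ hC hx fun w hw ↦
    csInf_le h_bdd (Set.mem_image_of_mem _ hw)
  refine ⟨⟨ν, u, γ, hd, h_le.antisymm (le_csInf h_ne (h_weak hd))⟩, ?_⟩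
  rintro _ ⟨ν', u', γ', hd', rfl⟩
  exact le_csInf h_ne (h_weak hd')

end LassoDuality

section Coordinates

variable {d : ℕ}

theorem e2norm_eq_norm_toLp (x : Fin d → ℝ) : e2norm x = ‖WithLp.toLp 2 x‖ := by
  simp [e2norm, EuclideanSpace.norm_eq]

/-- The `ℓ1` norm, as a seminorm on Euclidean space, whose own norm is the `ℓ2` one. -/
noncomputable def l1Seminorm (d : ℕ) : Seminorm ℝ (EuclideanSpace ℝ (Fin d)) :=
  Seminorm.of (fun y ↦ l1norm y.ofLp)
    (fun y z ↦ by
      rw [l1norm, l1norm, l1norm, ← Finset.sum_add_distrib]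
      exact Finset.sum_le_sum fun i _ ↦ abs_add_le (y i) (z i))
    (fun c y ↦ by
      rw [l1norm, l1norm, Finset.mul_sum]
      exact Finset.sum_congr rfl fun i _ ↦ abs_mul c (y i))

theorem l1Seminorm_toLp (x : Fin d → ℝ) : l1Seminorm d (WithLp.toLp 2 x) = l1norm x := rfl

theorem l1norm_ne_zero {x : Fin d → ℝ} (hx : x ≠ 0) : l1norm x ≠ 0 := by
  obtain ⟨i, hi⟩ := Function.ne_iff.1 hx
  exact (Finset.sum_pos' (fun j _ ↦ abs_nonneg (x j))
    ⟨i, Finset.mem_univ i, abs_pos.2 hi⟩).ne'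

theorem inner_toLp_eq_sum (x y : Fin d → ℝ) :
    ⟪WithLp.toLp 2 x, WithLp.toLp 2 y⟫ = ∑ i, x i * y i := by
  simp [EuclideanSpace.inner_toLp_toLp, dotProduct, mul_comm]

theorem forall_inner_le_mul_l1Seminorm_iff {u : Fin d → ℝ} {ν : ℝ} :
    (∀ y, ⟪WithLp.toLp 2 u, y⟫ ≤ ν * l1Seminorm d y) ↔ ∀ i, |u i| ≤ ν := by
  constructor
  · intro h i
    have h_single (t : ℝ) : t * u i ≤ ν * |t| := by
      have h_eval := h (WithLp.toLp 2 (Pi.single i t))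
      rw [inner_toLp_eq_sum, l1Seminorm_toLp, l1norm] at h_eval
      simpa [Pi.single_apply, apply_ite abs, mul_comm] using h_eval
    exact abs_le'.2 ⟨by simpa using h_single 1, by simpa using h_single (-1)⟩
  · rintro h ⟨y⟩
    rw [inner_toLp_eq_sum, l1Seminorm_toLp, l1norm, Finset.mul_sum]
    refine Finset.sum_le_sum fun i _ ↦ (le_abs_self _).trans ?_
    rw [abs_mul]
    exact mul_le_mul_of_nonneg_right (h i) (abs_nonneg _)

theorem tailSum_eq_sum {n k : ℕ} {x : Fin n → ℝ} (hx : kSparseNonneg n k x) (lam : Fin n → ℝ) :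
    tailSum k lam x = ∑ i, lam i * x i := by
  refine Finset.sum_filter_of_ne fun i _ hi ↦ ?_
  by_contra! h_lt
  exact hi (by rw [hx.1 i h_lt, mul_zero])

theorem l1norm_eq_sum {x : Fin d → ℝ} (hx : ∀ i, 0 ≤ x i) : l1norm x = ∑ i, x i :=
  Finset.sum_congr rfl fun i _ ↦ abs_of_nonneg (hx i)

theorem lassoObjective_toLp (G σ : ℝ) (h w : Fin d → ℝ) :
    lassoObjective G σ (WithLp.toLp 2 h) (WithLp.toLp 2 w) =
      √(e2norm w ^ 2 + σ ^ 2) * G + ∑ i, h i * w i := by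
  rw [lassoObjective, ← e2norm_eq_norm_toLp, inner_toLp_eq_sum]

theorem toLp_mem_lassoFeasible_iff {x w : Fin d → ℝ} {C : ℝ} :
    WithLp.toLp 2 w ∈ lassoFeasible (l1Seminorm d) (WithLp.toLp 2 x) C ↔
      e2norm w ≤ C ∧ l1norm (x + w) ≤ l1norm x := by
  rw [e2norm_eq_norm_toLp]
  rfl

theorem image_lassoObjective_lassoFeasible_toLp (G σ C : ℝ) (h x : Fin d → ℝ) :
    lassoObjective G σ (WithLp.toLp 2 h) '' lassoFeasible (l1Seminorm d) (WithLp.toLp 2 x) C =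
      (fun w : Fin d → ℝ ↦ √(e2norm w ^ 2 + σ ^ 2) * G + ∑ i, h i * w i) ''
        {w | e2norm w ≤ C ∧ l1norm (x + w) ≤ l1norm x} := by
  ext z
  simp only [Set.mem_image, (WithLp.toLp_surjective 2).exists, toLp_mem_lassoFeasible_iff,
    lassoObjective_toLp, Set.mem_ofPred_eq]

theorem e2norm_add_sub (h lam : Fin d → ℝ) (ν : ℝ) :
    e2norm (fun i ↦ h i + ν - lam i) = ‖WithLp.toLp 2 h + WithLp.toLp 2 (fun i ↦ ν - lam i)‖ := by
  simp only [e2norm_eq_norm_toLp, ← WithLp.toLp_add, Pi.add_def, add_sub_assoc]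

theorem lassoDualFeasible_toLp_iff {G ν γ : ℝ} {h lam : Fin d → ℝ} :
    LassoDualFeasible (l1Seminorm d) G (WithLp.toLp 2 h) ν (WithLp.toLp 2 fun i ↦ ν - lam i) γ ↔
      0 ≤ ν ∧ (∀ i, 0 ≤ lam i ∧ lam i ≤ 2 * ν) ∧ 0 ≤ γ ∧
        e2norm (fun i ↦ h i + ν - lam i) ≤ G + γ := by
  have h_box : (∀ i, |ν - lam i| ≤ ν) ↔ ∀ i, 0 ≤ lam i ∧ lam i ≤ 2 * ν :=
    forall_congr' fun i ↦ by
      rw [abs_le]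
      constructor <;> rintro ⟨h₁, h₂⟩ <;> constructor <;> linarith
  rw [← h_box, ← forall_inner_le_mul_l1Seminorm_iff, e2norm_add_sub]
  exact ⟨fun hd ↦ ⟨hd.nu_nonneg, hd.inner_le, hd.gamma_nonneg, hd.norm_le⟩,
    fun ⟨hν, hu, hγ, hG⟩ ↦ ⟨hν, hu, hγ, hG⟩⟩

theorem lassoDualObjective_toLp {k : ℕ} {x : Fin d → ℝ} (hx : kSparseNonneg d k x)
    (G σ C : ℝ) (h lam : Fin d → ℝ) (ν γ : ℝ) :
    lassoDualObjective (l1Seminorm d) G σ C (WithLp.toLp 2 h) (WithLp.toLp 2 x) ν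
        (WithLp.toLp 2 fun i ↦ ν - lam i) γ =
      σ * √((G + γ) ^ 2 - e2norm (fun i ↦ h i + ν - lam i) ^ 2)
        - tailSum k lam x - γ * √(C ^ 2 + σ ^ 2) := by
  have h_pairing : ν * l1norm x - ∑ i, (ν - lam i) * x i = tailSum k lam x := by
    rw [l1norm_eq_sum hx.2, tailSum_eq_sum hx, Finset.mul_sum, ← Finset.sum_sub_distrib]
    exact Finset.sum_congr rfl fun i _ ↦ by ring
  rw [lassoDualObjective, ← e2norm_add_sub, l1Seminorm_toLp, inner_toLp_eq_sum, h_pairing]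

theorem setOf_lassoDualObjective_toLp {k : ℕ} {x : Fin d → ℝ} (hx : kSparseNonneg d k x)
    (G σ C : ℝ) (h : Fin d → ℝ) :
    {z | ∃ ν u γ, LassoDualFeasible (l1Seminorm d) G (WithLp.toLp 2 h) ν u γ ∧
        z = lassoDualObjective (l1Seminorm d) G σ C (WithLp.toLp 2 h) (WithLp.toLp 2 x) ν u γ} =
      {z | ∃ ν : ℝ, ∃ lam : Fin d → ℝ, ∃ γ : ℝ,
        0 ≤ ν ∧ (∀ i, 0 ≤ lam i ∧ lam i ≤ 2 * ν) ∧ 0 ≤ γ ∧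
        e2norm (fun i ↦ h i + ν - lam i) ≤ G + γ ∧
        z = σ * √((G + γ) ^ 2 - e2norm (fun i ↦ h i + ν - lam i) ^ 2)
            - tailSum k lam x - γ * √(C ^ 2 + σ ^ 2)} := by
  have h_surj (ν : ℝ) :
      Function.Surjective fun lam : Fin d → ℝ ↦ WithLp.toLp 2 fun i ↦ ν - lam i :=
    (WithLp.toLp_surjective 2).comp (Equiv.subLeft fun _ ↦ ν).surjective
  ext z
  refine exists_congr fun ν ↦ (h_surj ν).exists.trans ?_
  simp only [lassoDualFeasible_toLp_iff, lassoDualObjective_toLp hx, and_assoc]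

end Coordinates

theorem lasso_stmt3 (m n k : ℕ) (hn : 1 ≤ n) (hk1 : 1 ≤ k) (hkn : k ≤ n)
    (xt : Fin n → ℝ) (hxt : kSparseNonneg n k xt) (hxt0 : xt ≠ 0)
    (σ Cw : ℝ) (hσ : 0 < σ) (hCw : 0 < Cw)
    (g : Fin m → ℝ) (h : Fin n → ℝ) :
    sInf ((fun w : Fin n → ℝ =>
        Real.sqrt (e2norm w ^ 2 + σ ^ 2) * e2norm g + ∑ i, h i * w i) ''
      {w : Fin n → ℝ | e2norm w ≤ Cw ∧ l1norm (xt + w) ≤ l1norm xt})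
    = sSup {z : ℝ | ∃ ν : ℝ, ∃ lam : Fin n → ℝ, ∃ γ : ℝ,
        0 ≤ ν ∧ (∀ i, 0 ≤ lam i ∧ lam i ≤ 2 * ν) ∧ 0 ≤ γ ∧
        e2norm (fun i => h i + ν - lam i) ≤ e2norm g + γ ∧
        z = σ * Real.sqrt ((e2norm g + γ) ^ 2
              - e2norm (fun i => h i + ν - lam i) ^ 2)
            - tailSum k lam xt - γ * Real.sqrt (Cw ^ 2 + σ ^ 2)} := by
  rw [← image_lassoObjective_lassoFeasible_toLp, ← setOf_lassoDualObjective_toLp hxt]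
  exact (lasso_stmt3_general (Real.sqrt_nonneg _) hσ.le hCw
    (l1norm_ne_zero hxt0)).csSup_eq.symm
end

section
/- Fix integers n ≥ 1 and k with 1 ≤ k ≤ n, let x̃ ∈ ℝⁿ be k-sparse nonnegative, σ > 0, g ∈ ℝᵐ and h ∈ ℝⁿ. Suppose ν̂ ≥ 0 and λ̂ ∈ ℝⁿ with 0 ≤ λ̂_i ≤ 2ν̂ for all i attain the supremum defining ξ_ov(σ, g, h, x̃), write Ĥ = ‖h + ν̂·1 − λ̂‖₂ ≤ ‖g‖₂, and suppose H_gen(g, h) < ‖g‖₂. Then Ĥ ≤ H_gen(g, h), and consequently σ·Ĥ/√(‖g‖₂² − Ĥ²) ≤ σ·H_gen(g, h)/√(‖g‖₂² − H_gen(g, h)²). In other words, the norm of the LASSO error vector for any k-sparse nonnegative x̃ is dominated by the 'generic' (worst-case, infinite-magnitude) error norm. -/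
/-- The constraint set of the "overwhelming" optimization ξ_ov. -/
def xiOvSet (m n k : ℕ) (σ : ℝ) (xt : Fin n → ℝ) (g : Fin m → ℝ) (h : Fin n → ℝ) :
    Set ℝ :=
  {z : ℝ | ∃ ν : ℝ, ∃ lam : Fin n → ℝ, 0 ≤ ν ∧
    (∀ i, 0 ≤ lam i ∧ lam i ≤ 2 * ν) ∧
    e2norm (fun i => h i + ν - lam i) ≤ e2norm g ∧
    z = σ * Real.sqrt (e2norm g ^ 2 - e2norm (fun i => h i + ν - lam i) ^ 2)
        - tailSum k lam xt}

/-- H_gen(g, h): the generic (infinite-magnitude) optimal value (2.110). -/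
noncomputable def HgenFun (m n k : ℕ) (g : Fin m → ℝ) (h : Fin n → ℝ) : ℝ :=
  sInf {y : ℝ | ∃ ν : ℝ, ∃ lam : Fin n → ℝ, 0 ≤ ν ∧
    (∀ i : Fin n, n - k ≤ (i : ℕ) → lam i = 0) ∧
    (∀ i : Fin n, (i : ℕ) < n - k → 0 ≤ lam i ∧ lam i ≤ 2 * ν) ∧
    y = e2norm (fun i => h i + ν - lam i)}

/- A point that is feasible for `H_gen` has `λ = 0` on the last `k` coordinates, so it is feasible
for `ξ_ov` as well and pays no penalty `∑ λᵢ x̃ᵢ`, provided its residual is no longer than `g`. The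
maximizer of `ξ_ov` pays a nonnegative penalty and still does at least as well, so its square-root
term is the larger one, that is, its residual is the shorter one. -/

section SqrtSqSubSq

variable (γ : ℝ)

lemma strictAntiOn_sqrt_sq_sub_sq :
    StrictAntiOn (fun r : ℝ => Real.sqrt (γ ^ 2 - r ^ 2)) (Set.Icc 0 γ) := by
  intro a ha b hb hab
  have hab_sq : a ^ 2 < b ^ 2 := pow_lt_pow_left₀ hab ha.1 two_ne_zero
  have hb_sq : b ^ 2 ≤ γ ^ 2 := pow_le_pow_left₀ hb.1 hb.2 2
  exact Real.sqrt_lt_sqrt (sub_nonneg.mpr hb_sq) (sub_lt_sub_left hab_sq _)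

lemma monotoneOn_div_sqrt_sq_sub_sq :
    MonotoneOn (fun r : ℝ => r / Real.sqrt (γ ^ 2 - r ^ 2)) (Set.Ico 0 γ) := by
  intro a ha b hb hab
  have hb_sq : b ^ 2 < γ ^ 2 := pow_lt_pow_left₀ hb.2 hb.1 two_ne_zero
  exact div_le_div₀ hb.1 hab (Real.sqrt_pos.mpr (sub_pos.mpr hb_sq))
    ((strictAntiOn_sqrt_sq_sub_sq γ).antitoneOn
      (Set.Ico_subset_Icc_self ha) (Set.Ico_subset_Icc_self hb) hab)

end SqrtSqSubSq

lemma e2norm_nonneg {d : ℕ} (x : Fin d → ℝ) : 0 ≤ e2norm x := Real.sqrt_nonneg _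

section TailSum

variable {n k : ℕ} {lam : Fin n → ℝ}

lemma tailSum_nonneg {x : Fin n → ℝ} (hlam : 0 ≤ lam) (hx : 0 ≤ x) : 0 ≤ tailSum k lam x :=
  Finset.sum_nonneg fun i _ => mul_nonneg (hlam i) (hx i)

lemma tailSum_eq_zero (hlam : ∀ i : Fin n, n - k ≤ (i : ℕ) → lam i = 0) (x : Fin n → ℝ) :
    tailSum k lam x = 0 :=
  Finset.sum_eq_zero fun i hi => by rw [hlam i (Finset.mem_filter.mp hi).2, zero_mul]

end TailSum

/-- Feasibility of `(ν, λ)` for the minimization `H_gen`. The last `k` coordinates, where `λ` must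
vanish, are the indices `i ≥ n - k` of `Fin n`. -/
structure GenFeasible {n : ℕ} (k : ℕ) (ν : ℝ) (lam : Fin n → ℝ) : Prop where
  nonneg : 0 ≤ ν
  tail_eq_zero : ∀ i : Fin n, n - k ≤ (i : ℕ) → lam i = 0
  head_mem : ∀ i : Fin n, (i : ℕ) < n - k → 0 ≤ lam i ∧ lam i ≤ 2 * ν

section Optimization

variable {m n k : ℕ} {σ ν : ℝ} {lam : Fin n → ℝ} {g : Fin m → ℝ} {h : Fin n → ℝ}

lemma GenFeasible.mem_box (hf : GenFeasible k ν lam) (i : Fin n) :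
    0 ≤ lam i ∧ lam i ≤ 2 * ν := by
  rcases lt_or_ge (i : ℕ) (n - k) with hhead | htail
  · exact hf.head_mem i hhead
  · rw [hf.tail_eq_zero i htail]
    exact ⟨le_rfl, mul_nonneg zero_le_two hf.nonneg⟩

lemma GenFeasible.mem_xiOvSet (hf : GenFeasible k ν lam)
    (hle : e2norm (fun i => h i + ν - lam i) ≤ e2norm g) (σ : ℝ) (xt : Fin n → ℝ) :
    σ * Real.sqrt (e2norm g ^ 2 - e2norm (fun i => h i + ν - lam i) ^ 2)
      ∈ xiOvSet m n k σ xt g h :=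
  ⟨ν, lam, hf.nonneg, hf.mem_box, hle, by rw [tailSum_eq_zero hf.tail_eq_zero, sub_zero]⟩

lemma le_HgenFun {a : ℝ}
    (ha : ∀ ν lam, GenFeasible k ν lam → a ≤ e2norm (fun i => h i + ν - lam i)) :
    a ≤ HgenFun m n k g h := by
  refine le_csInf ⟨_, 0, 0, le_rfl, fun _ _ => rfl, fun _ _ => by simp, rfl⟩ ?_
  rintro _ ⟨ν, lam, hν, htail, hhead, rfl⟩
  exact ha ν lam ⟨hν, htail, hhead⟩

lemma le_HgenFun_of_mem_upperBounds {xt : Fin n → ℝ} {H t : ℝ} (hσ : 0 < σ)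
    (hH : H ∈ Set.Icc 0 (e2norm g)) (ht : 0 ≤ t)
    (hmax : σ * Real.sqrt (e2norm g ^ 2 - H ^ 2) - t ∈ upperBounds (xiOvSet m n k σ xt g h)) :
    H ≤ HgenFun m n k g h := by
  refine le_HgenFun fun ν lam hf => ?_
  rcases le_total (e2norm g) (e2norm fun i => h i + ν - lam i) with hge | hle
  · exact hH.2.trans hge
  · have hsqrt : Real.sqrt (e2norm g ^ 2 - e2norm (fun i => h i + ν - lam i) ^ 2) ≤
        Real.sqrt (e2norm g ^ 2 - H ^ 2) :=
      le_of_mul_le_mul_left ((hmax (hf.mem_xiOvSet hle σ xt)).trans (sub_le_self _ ht)) hσ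
    exact ((strictAntiOn_sqrt_sq_sub_sq _).le_iff_ge ⟨e2norm_nonneg _, hle⟩ hH).mp hsqrt

end Optimization

theorem lasso_stmt8_general {m n k : ℕ} {xt : Fin n → ℝ} (hxt : 0 ≤ xt)
    {σ : ℝ} (hσ : 0 < σ) {g : Fin m → ℝ} {h : Fin n → ℝ} {νh : ℝ} {lamh : Fin n → ℝ}
    (hlamh : 0 ≤ lamh) (hHg : e2norm (fun i => h i + νh - lamh i) ≤ e2norm g)
    (hmax : σ * Real.sqrt (e2norm g ^ 2 - e2norm (fun i => h i + νh - lamh i) ^ 2)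
        - tailSum k lamh xt ∈ upperBounds (xiOvSet m n k σ xt g h))
    (hgen : HgenFun m n k g h < e2norm g) :
    e2norm (fun i => h i + νh - lamh i) ≤ HgenFun m n k g h ∧
    σ * e2norm (fun i => h i + νh - lamh i) /
        Real.sqrt (e2norm g ^ 2 - e2norm (fun i => h i + νh - lamh i) ^ 2)
      ≤ σ * HgenFun m n k g h /
        Real.sqrt (e2norm g ^ 2 - HgenFun m n k g h ^ 2) := by
  have hH0 := e2norm_nonneg fun i => h i + νh - lamh i
  have hle := le_HgenFun_of_mem_upperBounds hσ ⟨hH0, hHg⟩ (tailSum_nonneg hlamh hxt) hmax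
  refine ⟨hle, ?_⟩
  rw [mul_div_assoc, mul_div_assoc]
  exact mul_le_mul_of_nonneg_left (monotoneOn_div_sqrt_sq_sub_sq _
    ⟨hH0, hle.trans_lt hgen⟩ ⟨hH0.trans hle, hgen⟩ hle) hσ.le

theorem lasso_stmt8 (m n k : ℕ) (hn : 1 ≤ n) (hk1 : 1 ≤ k) (hkn : k ≤ n)
    (xt : Fin n → ℝ) (hxt : kSparseNonneg n k xt)
    (σ : ℝ) (hσ : 0 < σ) (g : Fin m → ℝ) (h : Fin n → ℝ)
    (νh : ℝ) (lamh : Fin n → ℝ)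
    (hνh : 0 ≤ νh) (hlamh : ∀ i, 0 ≤ lamh i ∧ lamh i ≤ 2 * νh)
    (hHg : e2norm (fun i => h i + νh - lamh i) ≤ e2norm g)
    (hmax : IsGreatest (xiOvSet m n k σ xt g h)
      (σ * Real.sqrt (e2norm g ^ 2 - e2norm (fun i => h i + νh - lamh i) ^ 2)
        - tailSum k lamh xt))
    (hgen : HgenFun m n k g h < e2norm g) :
    e2norm (fun i => h i + νh - lamh i) ≤ HgenFun m n k g h ∧
    σ * e2norm (fun i => h i + νh - lamh i) /
        Real.sqrt (e2norm g ^ 2 - e2norm (fun i => h i + νh - lamh i) ^ 2)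
      ≤ σ * HgenFun m n k g h /
        Real.sqrt (e2norm g ^ 2 - HgenFun m n k g h ^ 2) :=
  lasso_stmt8_general hxt.2 hσ (fun i => (hlamh i).1) hHg hmax.2 hgen
end
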